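/- arXiv:2007.08914 — 3 statements merged into one kernel-verified Lean document; each statement's English description precedes it below -/
import Mathlib

section
/- Let G = (V, E) be a finite directed acyclic graph with n vertices and let ℓ be an integer with 1 ≤ ℓ ≤ n. Then the vertex set V can be partitioned into at most ℓ chains of G together with at most ⌊n/ℓ⌋ antichains of G. (This is achieved by greedily removing a longest chain ℓ times: every chain of the remaining graph has at most n/ℓ vertices, so the remainder can be covered by ⌊n/ℓ⌋ antichains.) -/
/-- A chain of the DAG `(V, E)`: a set of vertices that is traced out by a
directed path (a duplicate-free list whose consecutive elements are joined by edges). -/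
def IsDagChain {V : Type*} (E : V → V → Prop) (S : Set V) : Prop :=
  ∃ l : List V, l.Nodup ∧ l.Chain' E ∧ {x | x ∈ l} = S

/-- An antichain of the DAG `(V, E)`: a set of vertices with no edge between any two of them. -/
def IsDagAntichain {V : Type*} (E : V → V → Prop) (S : Set V) : Prop :=
  ∀ x ∈ S, ∀ y ∈ S, ¬ E x y

/-! Remove a longest path `ℓ` times. Every remaining path is no longer than each of the `ℓ` disjoint
removed ones, so it has at most `n / ℓ` vertices. The remainder is layered as in Mirsky's theorem:
the vertices without a predecessor form an antichain, and since any path avoiding them can be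
prolonged at its start, removing them lowers the maximal path length. -/

open Function

theorem pairwise_on_fin_cons {α : Type*} {r : α → α → Prop} [Std.Symm r] {k : ℕ} {a : α}
    {f : Fin k → α} (ha : ∀ i, r a (f i)) (hf : Pairwise (r on f)) :
    Pairwise (r on (Fin.cons a f : Fin (k + 1) → α)) := by
  intro i j hij
  cases i using Fin.cases with
  | zero =>
    cases j using Fin.cases with
    | zero => exact absurd rfl hij
    | succ j => exact ha j
  | succ i =>
    cases j using Fin.cases with
    | zero => exact symm (ha i)
    | succ j => exact hf (ne_of_apply_ne Fin.succ hij)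

theorem exists_greedy_disjoint_family {V : Type*} [Finite V] {p : Finset V → Prop} (h_empty : p ∅)
    (k : ℕ) :
    ∃ P : Fin k → Finset V, (∀ i, p (P i)) ∧ Pairwise (Disjoint on P) ∧
      ∀ S, p S → (∀ i, Disjoint S (P i)) → ∀ i, S.card ≤ (P i).card := by
  induction k with
  | zero => exact ⟨Fin.elim0, fun i => i.elim0, fun i => i.elim0, fun _ _ _ i => i.elim0⟩
  | succ k ih =>
    obtain ⟨P, hp, hdisj, hmax⟩ := ih
    obtain ⟨C, ⟨hpC, hCP⟩, hCmax⟩ :=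
      Set.exists_max_image {S : Finset V | p S ∧ ∀ i, Disjoint S (P i)} Finset.card
        (Set.toFinite _) ⟨∅, h_empty, fun i => Finset.disjoint_empty_left (P i)⟩
    refine ⟨Fin.cons C P, Fin.cases hpC hp, pairwise_on_fin_cons hCP hdisj, ?_⟩
    intro S hpS hS
    have hSP : ∀ i, Disjoint S (P i) := fun i => hS i.succ
    exact Fin.cases (hCmax S ⟨hpS, hSP⟩) (hmax S hpS hSP)

theorem card_mul_le_card_of_pairwise_disjoint {ι V : Type*} [Fintype ι] [Fintype V]
    {P : ι → Finset V} (hdisj : Pairwise (Disjoint on P)) {m : ℕ} (hm : ∀ i, m ≤ (P i).card) :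
    Fintype.card ι * m ≤ Fintype.card V := by
  classical
  calc Fintype.card ι * m ≤ ∑ i, (P i).card := Finset.card_nsmul_le_sum _ _ _ fun i _ => hm i
    _ = (Finset.univ.biUnion P).card := (Finset.card_biUnion fun _ _ _ _ hij => hdisj hij).symm
    _ ≤ Fintype.card V := Finset.card_le_univ _

section Relation

variable {V : Type*} {E : V → V → Prop}

theorem nodup_of_isChain_of_acyclic (hacyc : ∀ v, ¬ Relation.TransGen E v v) {l : List V}
    (hl : l.IsChain E) : l.Nodup := by
  have hpath : l.Pairwise (Relation.TransGen E) :=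
    List.isChain_iff_pairwise.mp (hl.imp fun _ _ => Relation.TransGen.single)
  refine hpath.imp ?_
  rintro v _ hv rfl
  exact hacyc v hv

theorem isDagChain_empty : IsDagChain E ∅ :=
  ⟨[], List.nodup_nil, List.isChain_nil, by simp⟩

theorem exists_greedy_chains [Fintype V] (hacyc : ∀ v, ¬ Relation.TransGen E v v) (k : ℕ) :
    ∃ P : Fin k → Finset V, (∀ i, IsDagChain E (P i : Set V)) ∧ Pairwise (Disjoint on P) ∧
      ∀ l : List V, l.IsChain E → (∀ v ∈ l, ∀ i, v ∉ P i) → k * l.length ≤ Fintype.card V := by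
  classical
  obtain ⟨P, hchain, hdisj, hmax⟩ :=
    exists_greedy_disjoint_family (p := fun S : Finset V => IsDagChain E (S : Set V))
      (by simpa using isDagChain_empty) k
  refine ⟨P, hchain, hdisj, fun l hl hlP => ?_⟩
  have hnodup : l.Nodup := nodup_of_isChain_of_acyclic hacyc hl
  have hlP' : ∀ i, Disjoint l.toFinset (P i) := fun i =>
    Finset.disjoint_left.mpr fun v hv => hlP v (List.mem_toFinset.mp hv) i
  have hle : ∀ i, l.length ≤ (P i).card := by
    simpa only [List.toFinset_card_of_nodup hnodup] using
      hmax l.toFinset ⟨l, hnodup, hl, l.coe_toFinset.symm⟩ hlP'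
  simpa only [Fintype.card_fin] using card_mul_le_card_of_pairwise_disjoint hdisj hle

/-- The sources of the subgraph induced on `R`, which form the antichain split off from `R` in the
layering of `exists_antichain_partition_of_length_le`. -/
def sourcesIn (E : V → V → Prop) (R : Set V) : Set V :=
  {v ∈ R | ∀ u ∈ R, ¬ E u v}

theorem sourcesIn_subset (R : Set V) : sourcesIn E R ⊆ R :=
  Set.sep_subset _ _

theorem isDagAntichain_sourcesIn (R : Set V) : IsDagAntichain E (sourcesIn E R) :=
  fun x hx _ hy => hy.2 x hx.1

theorem length_lt_of_forall_mem_sdiff_sourcesIn {R : Set V} {k : ℕ} (hk : 0 < k)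
    (hR : ∀ l : List V, l.IsChain E → (∀ v ∈ l, v ∈ R) → l.length ≤ k)
    {l : List V} (hl : l.IsChain E) (hlR : ∀ v ∈ l, v ∈ R \ sourcesIn E R) : l.length < k := by
  cases l with
  | nil => exact hk
  | cons v l =>
    obtain ⟨hvR, hv⟩ := hlR v List.mem_cons_self
    obtain ⟨u, huR, huv⟩ : ∃ u ∈ R, E u v := by
      simpa [sourcesIn, hvR] using hv
    exact hR (u :: v :: l) (hl.cons_cons huv)
      (List.forall_mem_cons.mpr ⟨huR, fun w hw => (hlR w hw).1⟩)

theorem exists_antichain_partition_of_length_le {R : Set V} {k : ℕ}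
    (hR : ∀ l : List V, l.IsChain E → (∀ v ∈ l, v ∈ R) → l.length ≤ k) :
    ∃ Q : Fin k → Set V, (∀ j, IsDagAntichain E (Q j)) ∧ Pairwise (Disjoint on Q) ∧
      ⋃ j, Q j = R := by
  induction k generalizing R with
  | zero =>
    have hR_empty : R = ∅ := Set.eq_empty_of_forall_notMem fun v hv => by
      simpa using hR [v] (List.isChain_singleton v) (by simpa using hv)
    exact ⟨Fin.elim0, fun j => j.elim0, fun j => j.elim0, by simp [hR_empty]⟩
  | succ k ih =>
    obtain ⟨Q, hanti, hdisj, hunion⟩ := ih (R := R \ sourcesIn E R) fun l hl hlR =>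
      Nat.lt_succ_iff.mp (length_lt_of_forall_mem_sdiff_sourcesIn k.succ_pos hR hl hlR)
    have hQ : ∀ j, Disjoint (sourcesIn E R) (Q j) := fun j =>
      Set.disjoint_sdiff_right.mono_right (hunion ▸ Set.subset_iUnion Q j)
    refine ⟨Fin.cons (sourcesIn E R) Q, Fin.cases (isDagAntichain_sourcesIn R) hanti,
      pairwise_on_fin_cons hQ hdisj, ?_⟩
    calc ⋃ j, (Fin.cons (sourcesIn E R) Q : Fin (k + 1) → Set V) j
        = sourcesIn E R ∪ ⋃ j, Q j := by ext v; simp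
      _ = R := by rw [hunion, Set.union_sdiff_cancel (sourcesIn_subset R)]

end Relation

theorem stmt1 {V : Type*} [Fintype V] (E : V → V → Prop)
    (hacyc : ∀ v : V, ¬ Relation.TransGen E v v)
    (n : ℕ) (hn : Fintype.card V = n)
    (ℓ : ℕ) (hℓ1 : 1 ≤ ℓ) (hℓn : ℓ ≤ n) :
    ∃ (a b : ℕ) (P : Fin a → Set V) (Q : Fin b → Set V),
      a ≤ ℓ ∧ b ≤ n / ℓ ∧
      (∀ i, IsDagChain E (P i)) ∧
      (∀ j, IsDagAntichain E (Q j)) ∧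
      (∀ i j, i ≠ j → Disjoint (P i) (P j)) ∧
      (∀ i j, i ≠ j → Disjoint (Q i) (Q j)) ∧
      (∀ i j, Disjoint (P i) (Q j)) ∧
      ((⋃ i, P i) ∪ (⋃ j, Q j)) = Set.univ := by
  obtain ⟨P, hchain, hPdisj, hP⟩ := exists_greedy_chains hacyc ℓ
  have hlength : ∀ l : List V, l.IsChain E → (∀ v ∈ l, v ∈ (⋃ i, (P i : Set V))ᶜ) →
      l.length ≤ n / ℓ := by
    intro l hl hlP
    rw [Nat.le_div_iff_mul_le hℓ1, mul_comm, ← hn]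
    exact hP l hl fun v hv i hvP => hlP v hv (Set.mem_iUnion_of_mem i hvP)
  obtain ⟨Q, hanti, hQdisj, hQunion⟩ := exists_antichain_partition_of_length_le hlength
  refine ⟨ℓ, n / ℓ, fun i => P i, Q, le_rfl, le_rfl, hchain, hanti,
    fun i j hij => Finset.disjoint_coe.mpr (hPdisj hij), fun i j hij => hQdisj hij,
    fun i j => ?_, ?_⟩
  · exact disjoint_compl_right.mono (Set.subset_iUnion (fun i => (P i : Set V)) i)
      (hQunion ▸ Set.subset_iUnion Q j)
  · rw [hQunion, Set.union_compl_self]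
end

section
/- Let < be a strict partial order on a finite set V and let Q_1, …, Q_q be a path-respecting family of pairwise disjoint antichains of (V, <). Then there exists a topological order φ of (V, <) that is Q-compact: the vertices of each Q_i occupy consecutive φ-positions (no vertex outside Q_i has a label strictly between two labels of vertices of Q_i), and every vertex of Q_i has a smaller φ-label than every vertex of Q_j whenever i < j. -/
/-!
Assign to each vertex `v` the down-set of indices generated by the classes `Q i` containing a vertex
at or below `v`, and break ties between vertices with the same down-set by putting the vertices
covered by some `Q i` before the uncovered ones. This level is monotone, since a vertex strictly
below some `y ∈ Q i` lies above no vertex of a class of index at least `i`, and its fibre over the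
down-set `Iic i` and the value "covered" is exactly `Q i`. Ordering vertices lexicographically,
first by a linear extension of the levels and then by one of `V`, therefore makes every `Q i` a
block.
-/

open Function Set

universe u v

variable {V : Type u} {ι : Type v} {Q : ι → Set V}

/-- A family of vertex sets is path-respecting when comparable vertices of its members occur in
members with strictly increasing indices; over a preorder of indices, the case `i = j` says that
each member is an antichain. -/
def IsPathRespecting [LT V] [LT ι] (Q : ι → Set V) : Prop :=
  ∀ (i j : ι) (x y : V), x ∈ Q i → y ∈ Q j → x < y → i < j

/-- A `Q`-compact topological order: each member of `Q` is a block of consecutive vertices, and the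
blocks follow the order of their indices. Labels may lie in any linear order `L`, not only in `ℕ`,
so that the notion also makes sense for infinite `V`. -/
structure IsCompactTopologicalOrder [Preorder V] [LT ι] {L : Type*} [LinearOrder L]
    (Q : ι → Set V) (φ : V → L) : Prop where
  injective : Injective φ
  strictMono : StrictMono φ
  not_between : ∀ (i : ι) (x y z : V), x ∈ Q i → y ∈ Q i → z ∉ Q i → ¬(φ x < φ z ∧ φ z < φ y)
  lt_of_index_lt : ∀ i j : ι, i < j → ∀ x ∈ Q i, ∀ y ∈ Q j, φ x < φ y

section Relabeling

variable {L : Type*} [LinearOrder L]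

theorem exists_nat_lt_iff_lt [Finite V] (φ : V → L) :
    ∃ ψ : V → ℕ, ∀ x y, ψ x < ψ y ↔ φ x < φ y := by
  have := Fintype.ofFinite (range φ)
  let e := Fintype.orderIsoFinOfCardEq (range φ) rfl
  exact ⟨fun v ↦ e.symm (rangeFactorization φ v), fun _ _ ↦ e.symm.lt_iff_lt⟩

theorem IsCompactTopologicalOrder.of_lt_iff_lt [Preorder V] [LT ι] {M : Type*} [LinearOrder M]
    {φ : V → L} {ψ : V → M} (hφ : IsCompactTopologicalOrder Q φ)
    (h : ∀ x y, ψ x < ψ y ↔ φ x < φ y) : IsCompactTopologicalOrder Q ψ where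
  injective x y hxy := hφ.injective <| eq_of_le_of_ge
    (not_lt.1 fun hlt ↦ ((h y x).2 hlt).ne' hxy) (not_lt.1 fun hlt ↦ ((h x y).2 hlt).ne hxy)
  strictMono x y hxy := (h x y).2 (hφ.strictMono hxy)
  not_between := by simpa only [h] using hφ.not_between
  lt_of_index_lt := by simpa only [h] using hφ.lt_of_index_lt

theorem IsCompactTopologicalOrder.exists_nat [Finite V] [Preorder V] [LT ι]
    {φ : V → L} (hφ : IsCompactTopologicalOrder Q φ) :
    ∃ ψ : V → ℕ, IsCompactTopologicalOrder Q ψ :=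
  (exists_nat_lt_iff_lt φ).imp fun _ ↦ hφ.of_lt_iff_lt

end Relabeling

theorem toLinearExtension_injective {α : Type*} [PartialOrder α] :
    Injective (toLinearExtension : α →o LinearExtension α) :=
  injective_id

theorem toLinearExtension_strictMono {α : Type*} [PartialOrder α] :
    StrictMono (toLinearExtension : α →o LinearExtension α) :=
  toLinearExtension.monotone.strictMono_of_injective toLinearExtension_injective

theorem isCompactTopologicalOrder_toLex [PartialOrder V] [Preorder ι] {K : Type*} [LinearOrder K]
    {f : V → K} {c : ι → K} (hf : Monotone f) (hc : StrictMono c)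
    (hQ : ∀ i v, f v = c i ↔ v ∈ Q i) :
    IsCompactTopologicalOrder Q fun v ↦ toLex (f v, toLinearExtension v) := by
  have injective : Injective fun v ↦ toLex (f v, toLinearExtension v) :=
    fun _ _ h ↦ toLinearExtension_injective (congrArg (fun p ↦ (ofLex p).2) h)
  have monotone : Monotone fun v ↦ toLex (f v, toLinearExtension v) :=
    Prod.Lex.toLex_mono.comp (hf.prodMk toLinearExtension.monotone)
  refine ⟨injective, monotone.strictMono_of_injective injective, ?_, ?_⟩
  · rintro i x y z hx hy hz ⟨hxz, hzy⟩
    have le_z : f x ≤ f z := Prod.Lex.monotone_fst _ _ hxz.le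
    have z_le : f z ≤ f y := Prod.Lex.monotone_fst _ _ hzy.le
    rw [← hQ] at hx hy hz
    exact hz (le_antisymm (z_le.trans_eq hy) (hx.symm.trans_le le_z))
  · intro i j hij x hx y hy
    rw [← hQ] at hx hy
    exact Prod.Lex.toLex_lt_toLex.2 (.inl (by simpa only [hx, hy] using hc hij))

theorem IsPathRespecting.index_le_of_le [PartialOrder V] [Preorder ι]
    (hQ : IsPathRespecting Q) (hdisj : Pairwise (Disjoint on Q)) {i j : ι} {x y : V}
    (hx : x ∈ Q i) (hy : y ∈ Q j) (hxy : x ≤ y) : i ≤ j := by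
  rcases hxy.eq_or_lt with rfl | hlt
  · exact (hdisj.eq (not_disjoint_iff.2 ⟨x, hx, hy⟩)).le
  · exact (hQ i j x y hx hy hlt).le

/-- The down-set of indices generated by the members of `Q` containing a vertex at or below `v`. -/
def indicesBelow [LE V] [Preorder ι] (Q : ι → Set V) (v : V) : LowerSet ι :=
  lowerClosure {i | ∃ x ∈ Q i, x ≤ v}

/-- The level of `v`, by which vertices are grouped into blocks. The second component is a truth
value; as `False < True`, it places covered vertices before uncovered ones. -/
def level [LE V] [Preorder ι] (Q : ι → Set V) (v : V) : LowerSet ι ×ₗ Prop :=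
  toLex (indicesBelow Q v, ∀ i, v ∉ Q i)

theorem mem_indicesBelow [Preorder V] [Preorder ι] {i : ι} {v : V} (hv : v ∈ Q i) :
    i ∈ indicesBelow Q v :=
  subset_lowerClosure ⟨v, hv, le_rfl⟩

theorem indicesBelow_mono [Preorder V] [Preorder ι] (Q : ι → Set V) :
    Monotone (indicesBelow Q) :=
  fun _ _ hvw ↦ lowerClosure_mono fun _ ⟨x, hx, hxv⟩ ↦ ⟨x, hx, hxv.trans hvw⟩

theorem IsPathRespecting.indicesBelow_eq_Iic [PartialOrder V] [Preorder ι]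
    (hQ : IsPathRespecting Q) (hdisj : Pairwise (Disjoint on Q)) {i : ι} {v : V} (hv : v ∈ Q i) :
    indicesBelow Q v = LowerSet.Iic i := by
  refine le_antisymm (lowerClosure_le.2 ?_) (LowerSet.Iic_le.2 (mem_indicesBelow hv))
  rintro j ⟨x, hx, hxv⟩
  exact hQ.index_le_of_le hdisj hx hv hxv

theorem IsPathRespecting.notMem_indicesBelow_of_lt [Preorder V] [Preorder ι]
    (hQ : IsPathRespecting Q) {i : ι} {v w : V} (hw : w ∈ Q i) (hvw : v < w) :
    i ∉ indicesBelow Q v := by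
  rintro ⟨j, ⟨x, hx, hxv⟩, hij⟩
  exact (hQ j i x w hx hw (hxv.trans_lt hvw)).not_ge hij

theorem IsPathRespecting.monotone_level [PartialOrder V] [Preorder ι]
    (hQ : IsPathRespecting Q) : Monotone (level Q) := by
  refine monotone_iff_forall_lt.2 fun v w hvw ↦ ?_
  refine Prod.Lex.toLex_le_toLex'.2 ⟨indicesBelow_mono Q hvw.le, fun heq _ i hw ↦ ?_⟩
  refine hQ.notMem_indicesBelow_of_lt hw hvw ?_
  rw [show indicesBelow Q v = indicesBelow Q w from heq]
  exact mem_indicesBelow hw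

theorem IsPathRespecting.level_eq_iff [PartialOrder V] [PartialOrder ι]
    (hQ : IsPathRespecting Q) (hdisj : Pairwise (Disjoint on Q)) (i : ι) (v : V) :
    level Q v = toLex (LowerSet.Iic i, False) ↔ v ∈ Q i := by
  simp only [level, EmbeddingLike.apply_eq_iff_eq, Prod.mk.injEq, eq_iff_iff, iff_false,
    not_forall, not_not]
  refine ⟨fun ⟨hIic, j, hj⟩ ↦ ?_, fun hv ↦ ⟨hQ.indicesBelow_eq_Iic hdisj hv, i, hv⟩⟩
  have hji : j = i := LowerSet.Iic_injective ((hQ.indicesBelow_eq_Iic hdisj hj).symm.trans hIic)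
  exact hji ▸ hj

theorem strictMono_toLex_Iic_false [Preorder ι] :
    StrictMono fun i : ι ↦ toLex (LowerSet.Iic i, False) :=
  fun _ _ hij ↦ Prod.Lex.toLex_lt_toLex.2 (.inl (LowerSet.Iic_strictMono ι hij))

theorem stmt4_general [PartialOrder V] [PartialOrder ι] (Q : ι → Set V)
    (hdisj : Pairwise (Disjoint on Q)) (hQ : IsPathRespecting Q) :
    ∃ (L : Type (max u v)) (_ : LinearOrder L) (φ : V → L), IsCompactTopologicalOrder Q φ :=
  ⟨LinearExtension (LowerSet ι ×ₗ Prop) ×ₗ LinearExtension V, inferInstance, _,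
    isCompactTopologicalOrder_toLex
      (toLinearExtension.monotone.comp hQ.monotone_level)
      (toLinearExtension_strictMono.comp strictMono_toLex_Iic_false)
      fun i v ↦ toLinearExtension_injective.eq_iff.trans (hQ.level_eq_iff hdisj i v)⟩

theorem stmt4 {V : Type*} [Fintype V] [PartialOrder V]
    (q : ℕ) (Q : Fin q → Set V)
    (hQdisj : ∀ i j, i ≠ j → Disjoint (Q i) (Q j))
    (hQanti : ∀ i, IsAntichain (· < ·) (Q i))
    (hQpr : ∀ (i j : Fin q) (x y : V), x ∈ Q i → y ∈ Q j → x < y → i < j) :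
    ∃ φ : V → ℕ,
      Function.Injective φ ∧
      (∀ x y : V, x < y → φ x < φ y) ∧
      (∀ (i : Fin q) (x y z : V), x ∈ Q i → y ∈ Q i → z ∉ Q i →
        ¬(φ x < φ z ∧ φ z < φ y)) ∧
      (∀ i j : Fin q, i < j → ∀ x ∈ Q i, ∀ y ∈ Q j, φ x < φ y) := by
  obtain ⟨_, _, _, hφ⟩ := stmt4_general Q hQdisj hQpr
  exact hφ.exists_nat.imp fun _ h ↦ ⟨h.injective, h.strictMono, h.not_between, h.lt_of_index_lt⟩
end

section
/- There exist a finite set V with a strict partial order <, a partition of V into a set W_P that is a union of pairwise disjoint chains and a set W_Q that is the union of a path-respecting family of pairwise disjoint antichains, a topological order φ of (V, <) (not Q-compact), vertices u, v ∈ V, a W_P-restricted LCA w_P of (u, v) and a W_Q-restricted LCA w_Q of (u, v), such that the one of w_P, w_Q with the larger φ-label is NOT an LCA of (u, v) in (V, <). Hence combining chain-restricted and antichain-restricted LCAs by taking the φ-maximum fails for arbitrary topological orders. -/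
/-!
A restricted LCA of `(u, v)` can lie below a common ancestor of `u` and `v` outside the set it is
restricted to. Take an antichain `{q, x}` both of whose members are common ancestors of `u` and `v`,
and a chain element `p < x` incomparable to `q`. The restricted LCAs can then be chosen to be `p`
and `q`, and a topological order may label `q` first, then `p`, then `x`. So `p` has the larger
label, although `x` is a common ancestor above it.
-/

section RestrictedLCA

variable {α : Type*} {W : Set α} {u v w x : α}

section Preorder

variable [Preorder α]

/-- The set of common ancestors of `u` and `v`; the order is such that `w ≤ u` when `w` is an
ancestor of `u`. -/
def commonAncestors (u v : α) : Set α := Set.Iic u ∩ Set.Iic v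

/-- The `W`-restricted lowest common ancestors of `(u, v)`. They are drawn lowest in a
DAG with descendants below their ancestors, hence are maximal for the order `<`. -/
def IsRestrictedLCA (W : Set α) (u v w : α) : Prop := Maximal (· ∈ W ∩ commonAncestors u v) w

/-- The lowest common ancestors of `(u, v)`: the restricted ones with respect to the whole order. -/
def IsLCA (u v w : α) : Prop := IsRestrictedLCA Set.univ u v w

theorem isRestrictedLCA_of_isAntichain (h : IsAntichain (· ≤ ·) (W ∩ commonAncestors u v))
    (hW : w ∈ W) (hw : w ∈ commonAncestors u v) : IsRestrictedLCA W u v w :=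
  h.maximal_mem_iff.2 ⟨hW, hw⟩

theorem not_isLCA_of_lt (hx : x ∈ commonAncestors u v) (hwx : w < x) : ¬IsLCA u v w :=
  fun hw => hw.not_prop_of_gt hwx ⟨Set.mem_univ x, hx⟩

theorem not_isLCA_ite_of_lt {β : Type*} [LT β] [DecidableLT β] {φ : α → β} {p q : α}
    (hφ : φ q < φ p) (hpx : p < x) (hx : x ∈ commonAncestors u v) :
    ¬IsLCA u v (if φ q < φ p then p else q) := by
  rw [if_pos hφ]
  exact not_isLCA_of_lt hx hpx

end Preorder

section PartialOrder

variable [PartialOrder α]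

theorem mem_commonAncestors_iff :
    w ∈ commonAncestors u v ↔ (w < u ∨ w = u) ∧ (w < v ∨ w = v) :=
  and_congr le_iff_lt_or_eq le_iff_lt_or_eq

theorem isRestrictedLCA_iff :
    IsRestrictedLCA W u v w ↔ w ∈ W ∧ (w < u ∨ w = u) ∧ (w < v ∨ w = v) ∧
      ∀ w' ∈ W, w < w' → ¬((w' < u ∨ w' = u) ∧ (w' < v ∨ w' = v)) := by
  simp only [IsRestrictedLCA, maximal_iff_forall_gt, Set.mem_inter_iff, mem_commonAncestors_iff,
    and_assoc]
  grind

theorem isLCA_iff :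
    IsLCA u v w ↔ (w < u ∨ w = u) ∧ (w < v ∨ w = v) ∧
      ∀ w', w < w' → ¬((w' < u ∨ w' = u) ∧ (w' < v ∨ w' = v)) := by
  simp only [IsLCA, isRestrictedLCA_iff, Set.mem_univ, true_and, forall_const]

end PartialOrder

end RestrictedLCA

section LevelSet

variable {α ι : Type*} {W : Set α} {ρ : α → ι}

/-- The part of `W` on which the rank function `ρ` takes the value `i`. If `ρ` is
strictly monotone on `W`, these sets are a path-respecting family of antichains. -/
def levelSet (W : Set α) (ρ : α → ι) (i : ι) : Set α := W ∩ ρ ⁻¹' {i}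

theorem disjoint_levelSet {i j : ι} (hij : i ≠ j) : Disjoint (levelSet W ρ i) (levelSet W ρ j) :=
  (pairwise_disjoint_fiber ρ hij).mono Set.inter_subset_right Set.inter_subset_right

theorem iUnion_levelSet : ⋃ i, levelSet W ρ i = W := by
  ext x
  simp [levelSet]

variable [Preorder α] [Preorder ι]

theorem lt_of_mem_levelSet_of_lt (hρ : StrictMonoOn ρ W) {i j : ι} {x y : α}
    (hx : x ∈ levelSet W ρ i) (hy : y ∈ levelSet W ρ j) (hxy : x < y) : i < j := by
  obtain ⟨hxW, rfl⟩ := hx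
  obtain ⟨hyW, rfl⟩ := hy
  exact hρ hxW hyW hxy

theorem isAntichain_levelSet (hρ : StrictMonoOn ρ W) (i : ι) :
    IsAntichain (· < ·) (levelSet W ρ i) :=
  fun _ hx _ hy _ hxy => lt_irrefl i (lt_of_mem_levelSet_of_lt hρ hx hy hxy)

end LevelSet

/-- The vertices of the counterexample. -/
inductive Vertex
  | p | q | x | u | v
  deriving DecidableEq

namespace Vertex

instance : Fintype Vertex where
  elems := {p, q, x, u, v}
  complete w := by cases w <;> decide

/-- The ancestor relation of the counterexample: the transitive closure of the DAG with edges
`p → x` and `q → u`, `q → v`, `x → u`, `x → v`. -/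
def Precedes : Vertex → Vertex → Prop
  | p, x | p, u | p, v | q, u | q, v | x, u | x, v => True
  | _, _ => False

instance : DecidableRel Precedes := fun a b => by
  unfold Precedes
  split <;> infer_instance

instance : IsStrictOrder Vertex Precedes where
  irrefl := by decide
  trans := by decide

instance : PartialOrder Vertex := partialOrderOfSO Precedes

instance : DecidableLT Vertex := inferInstanceAs (DecidableRel Precedes)

instance : DecidableLE Vertex := fun a b => inferInstanceAs (Decidable (a = b ∨ Precedes a b))

/-- The topological order `φ` of the counterexample, which separates `q` from `x` by `p`. -/
def label : Vertex → ℕ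
  | q => 0 | p => 1 | x => 2 | u => 3 | v => 4

theorem label_injective : Function.Injective label := by
  unfold Function.Injective
  decide

theorem label_strictMono : StrictMono label := by
  unfold StrictMono
  decide

/-- The set `W_P` of the counterexample, a single chain. -/
def chainPart : Set Vertex := {p, u}

/-- The set `W_Q` of the counterexample, the union of the antichains `{q, x}` and `{v}`. -/
def antichainPart : Set Vertex := {q, x, v}

/-- The rank function whose level sets in `W_Q` are the antichains `{q, x}` and `{v}`. -/
def layer : Vertex → Fin 2
  | v => 1
  | _ => 0

theorem compl_chainPart : chainPartᶜ = antichainPart := by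
  ext w
  simp only [chainPart, antichainPart, Set.mem_compl_iff, Set.mem_insert_iff,
    Set.mem_singleton_iff]
  decide +revert

theorem isCompl_chainPart_antichainPart : IsCompl chainPart antichainPart :=
  compl_chainPart ▸ isCompl_compl

theorem isChain_chainPart : IsChain (· < ·) chainPart :=
  IsChain.pair (by decide : p < u)

theorem layer_strictMonoOn : StrictMonoOn layer antichainPart := by
  simp only [StrictMonoOn, antichainPart, Set.mem_insert_iff, Set.mem_singleton_iff]
  decide

theorem commonAncestors_u_v : commonAncestors u v = {p, q, x} := by
  ext w
  simp only [commonAncestors, Set.mem_inter_iff, Set.mem_Iic, Set.mem_insert_iff,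
    Set.mem_singleton_iff]
  decide +revert

theorem isRestrictedLCA_chainPart : IsRestrictedLCA chainPart u v p := by
  have h : chainPart ∩ commonAncestors u v = {p} := by
    simp [chainPart, commonAncestors_u_v, Set.insert_inter_of_mem]
  exact isRestrictedLCA_of_isAntichain (h ▸ IsAntichain.singleton) (by simp [chainPart])
    (by simp [commonAncestors_u_v])

theorem isRestrictedLCA_antichainPart : IsRestrictedLCA antichainPart u v q := by
  have h : antichainPart ∩ commonAncestors u v = {q, x} := by
    simp [antichainPart, commonAncestors_u_v, Set.insert_inter_of_mem]
  have hqx : IsAntichain (· ≤ ·) ({q, x} : Set Vertex) := by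
    simp only [isAntichain_iff_forall_not_lt, Set.mem_insert_iff, Set.mem_singleton_iff]
    decide
  exact isRestrictedLCA_of_isAntichain (h ▸ hqx) (by simp [antichainPart])
    (by simp [commonAncestors_u_v])

theorem not_isLCA_label_max : ¬IsLCA u v (if label q < label p then p else q) :=
  not_isLCA_ite_of_lt (by decide) (by decide : p < x) (by simp [commonAncestors_u_v])

end Vertex

theorem stmt10 :
    ∃ (V : Type) (_ : Fintype V) (lt : V → V → Prop),
      -- `lt` is a strict partial order on `V`
      (∀ a : V, ¬ lt a a) ∧ (∀ a b c : V, lt a b → lt b c → lt a c) ∧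
      ∃ (WP WQ : Set V) (pn qn : ℕ) (P : Fin pn → Set V) (Q : Fin qn → Set V)
        (φ : V → ℕ) (u v wP wQ : V),
        -- `WP, WQ` partition `V`
        WP ∪ WQ = Set.univ ∧ Disjoint WP WQ ∧
        -- `WP` is a union of pairwise disjoint chains
        (∀ i j, i ≠ j → Disjoint (P i) (P j)) ∧
        (∀ i, IsChain lt (P i)) ∧
        (⋃ i, P i) = WP ∧
        -- `WQ` is the union of a path-respecting family of pairwise disjoint antichains
        (∀ i j, i ≠ j → Disjoint (Q i) (Q j)) ∧
        (∀ i, IsAntichain lt (Q i)) ∧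
        (∀ (i j : Fin qn) (x y : V), x ∈ Q i → y ∈ Q j → lt x y → i < j) ∧
        (⋃ i, Q i) = WQ ∧
        -- `φ` is a topological order (not required to be Q-compact)
        Function.Injective φ ∧ (∀ x y : V, lt x y → φ x < φ y) ∧
        -- `wP` is a `WP`-restricted LCA of `(u, v)`
        (wP ∈ WP ∧ (lt wP u ∨ wP = u) ∧ (lt wP v ∨ wP = v) ∧
          ∀ w' ∈ WP, lt wP w' → ¬((lt w' u ∨ w' = u) ∧ (lt w' v ∨ w' = v))) ∧
        -- `wQ` is a `WQ`-restricted LCA of `(u, v)`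
        (wQ ∈ WQ ∧ (lt wQ u ∨ wQ = u) ∧ (lt wQ v ∨ wQ = v) ∧
          ∀ w' ∈ WQ, lt wQ w' → ¬((lt w' u ∨ w' = u) ∧ (lt w' v ∨ w' = v))) ∧
        -- the candidate with the larger φ-label is NOT an LCA of `(u, v)` in `(V, lt)`
        ¬((lt (if φ wQ < φ wP then wP else wQ) u ∨ (if φ wQ < φ wP then wP else wQ) = u) ∧
          (lt (if φ wQ < φ wP then wP else wQ) v ∨ (if φ wQ < φ wP then wP else wQ) = v) ∧
          ∀ w' : V, lt (if φ wQ < φ wP then wP else wQ) w' →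
            ¬((lt w' u ∨ w' = u) ∧ (lt w' v ∨ w' = v))) := by
  refine ⟨Vertex, inferInstance, (· < ·), lt_irrefl, fun _ _ _ => lt_trans,
    Vertex.chainPart, Vertex.antichainPart, 1, 2, fun _ => Vertex.chainPart,
    levelSet Vertex.antichainPart Vertex.layer, Vertex.label, .u, .v, .p, .q, ?_⟩
  exact ⟨Vertex.isCompl_chainPart_antichainPart.sup_eq_top,
    Vertex.isCompl_chainPart_antichainPart.disjoint,
    fun i j hij => absurd (Subsingleton.elim i j) hij,
    fun _ => Vertex.isChain_chainPart,
    Set.iUnion_const _,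
    fun _ _ => disjoint_levelSet,
    isAntichain_levelSet Vertex.layer_strictMonoOn,
    fun _ _ _ _ => lt_of_mem_levelSet_of_lt Vertex.layer_strictMonoOn,
    iUnion_levelSet,
    Vertex.label_injective,
    fun _ _ hab => Vertex.label_strictMono hab,
    isRestrictedLCA_iff.1 Vertex.isRestrictedLCA_chainPart,
    isRestrictedLCA_iff.1 Vertex.isRestrictedLCA_antichainPart,
    isLCA_iff.not.1 Vertex.not_isLCA_label_max⟩
end
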